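/- Let 2 < p < 6, 2 < q < 4 and μ > 0. Then F_{p,q} is bounded below and has negative infimum on the mass-constraint set: there exists C ∈ ℝ such that F_{p,q}(u) ≥ C for every u ∈ H¹(ℝ) with ‖u‖₂² = μ, and there exists u₀ ∈ H¹(ℝ) with ‖u₀‖₂² = μ and F_{p,q}(u₀) < 0. -/

import Mathlib

open MeasureTheory Real Set

noncomputable section

/-- `u ∈ H¹(ℝ)` with weak derivative `u'`: `u` is continuous, square-integrable,
`u'` is square-integrable, and `u(b) − u(a) = ∫_a^b u'(t) dt` for all `a ≤ b`. -/
def IsH1 (u u' : ℝ → ℝ) : Prop :=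
  Continuous u ∧ Integrable (fun x => (u x) ^ 2) ∧ Integrable (fun x => (u' x) ^ 2) ∧
    ∀ a b : ℝ, a ≤ b → u b - u a = ∫ t in a..b, u' t

/-- The mass `‖u‖₂² = ∫_ℝ u(x)² dx`. -/
def mass (u : ℝ → ℝ) : ℝ := ∫ x, (u x) ^ 2

/-- `D_q(u) = (1/2)∫ u'² − (1/q)|u(0)|^q`. -/
def Dfun (q : ℝ) (u u' : ℝ → ℝ) : ℝ :=
  (1 / 2) * (∫ x, (u' x) ^ 2) - (1 / q) * |u 0| ^ q

/-- `F_{p,q}(u) = (1/2)∫ u'² − (1/p)∫ |u|^p − (1/q)|u(0)|^q`. -/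
def Ffun (p q : ℝ) (u u' : ℝ → ℝ) : ℝ :=
  (1 / 2) * (∫ x, (u' x) ^ 2) - (1 / p) * (∫ x, |u x| ^ p) - (1 / q) * |u 0| ^ q

/-- Cauchy-Schwarz on an interval, with no measurability assumption on the derivative. -/
lemma osc_sq (u' : ℝ → ℝ) (h2 : Integrable (fun x => (u' x) ^ 2)) (a b : ℝ) (hab : a ≤ b) :
    (∫ t in a..b, u' t) ^ 2 ≤ (b - a) * ∫ x, (u' x) ^ 2 := by
  have hmeas : AEStronglyMeasurable (fun x => |u' x|) volume := by
    have h := h2.aestronglyMeasurable.aemeasurable.sqrt.aestronglyMeasurable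
    refine h.congr (Filter.Eventually.of_forall fun x => ?_)
    simp [Real.sqrt_sq_eq_abs]
  have hint : IntegrableOn (fun x => |u' x|) (Ioc a b) := by
    refine Integrable.mono' (g := fun x => 1 + (u' x) ^ 2) ?_ hmeas.restrict ?_
    · refine Integrable.add ?_ h2.integrableOn
      exact integrable_const _
    · refine Filter.Eventually.of_forall fun x => ?_
      simp only [Real.norm_eq_abs, abs_abs]
      nlinarith [sq_abs (u' x), sq_nonneg (|u' x| - 1)]
  set I := ∫ x in Ioc a b, |u' x| with hI
  set J := ∫ x in Ioc a b, (u' x) ^ 2 with hJ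
  have hJle : J ≤ ∫ x, (u' x) ^ 2 :=
    setIntegral_le_integral h2 (Filter.Eventually.of_forall fun x => sq_nonneg _)
  have hle : |∫ t in a..b, u' t| ≤ I := by
    rw [intervalIntegral.integral_of_le hab]
    exact norm_integral_le_integral_norm u'
  have hquad : ∀ t : ℝ, 0 ≤ (b - a) * (t * t) + (-2 * I) * t + J := by
    intro t
    have h0 : 0 ≤ ∫ x in Ioc a b, (t * t + (-2 * t) * |u' x| + (u' x) ^ 2) := by
      refine integral_nonneg (fun x => ?_)
      simp only [Pi.zero_apply]
      nlinarith [sq_abs (u' x), sq_nonneg (|u' x| - t)]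
    rw [integral_add, integral_add, integral_const_mul (-2 * t) (fun x => |u' x|)] at h0
    · simp only [integral_const, MeasurableSet.univ, measureReal_restrict_apply, univ_inter,
        Real.volume_real_Ioc_of_le hab, smul_eq_mul] at h0
      rw [← hI, ← hJ] at h0
      linarith
    · exact integrable_const _
    · exact hint.const_mul _
    · exact (integrable_const _).add (hint.const_mul _)
    · exact h2.integrableOn
  have hd := discrim_le_zero hquad
  rw [discrim] at hd
  have h1 : (∫ t in a..b, u' t) ^ 2 ≤ I ^ 2 := by
    rw [← sq_abs]
    exact pow_le_pow_left₀ (abs_nonneg _) hle 2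
  have : (b - a) * J ≤ (b - a) * ∫ x, (u' x) ^ 2 :=
    mul_le_mul_of_nonneg_left hJle (by linarith)
  nlinarith

/-- Gagliardo-Nirenberg sup bound. -/
lemma sup_bound (u u' : ℝ → ℝ) (h : IsH1 u u') (x : ℝ) :
    (u x) ^ 4 ≤ 16 * mass u * ∫ x, (u' x) ^ 2 := by
  obtain ⟨hc, h1, h2, hd⟩ := h
  set K := ∫ x, (u' x) ^ 2 with hK
  have hK0 : 0 ≤ K := integral_nonneg fun x => sq_nonneg _
  have hm0 : 0 ≤ mass u := integral_nonneg fun x => sq_nonneg _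
  have hquad : ∀ t : ℝ, 0 ≤ (2 * K) * (t * t) + (-(u x) ^ 2) * t + 2 * mass u := by
    intro t
    rcases le_total t 0 with ht | ht
    · have : 0 ≤ (u x) ^ 2 * (-t) := mul_nonneg (sq_nonneg _) (by linarith)
      have : 0 ≤ K * (t * t) := mul_nonneg hK0 (mul_self_nonneg t)
      nlinarith
    · have key : ∫ y in Ioc x (x + t), (u x) ^ 2 ≤
          ∫ y in Ioc x (x + t), (2 * (u y) ^ 2 + 2 * (t * K)) := by
        refine setIntegral_mono_on (integrable_const _) ?_ measurableSet_Ioc ?_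
        · exact (h1.integrableOn.const_mul 2).add (integrable_const _)
        · intro y hy
          have ho := osc_sq u' h2 x y hy.1.le
          rw [← hd x y hy.1.le, ← hK] at ho
          have : (y - x) * K ≤ t * K :=
            mul_le_mul_of_nonneg_right (by linarith [hy.2]) hK0
          nlinarith [sq_nonneg (2 * u y - u x)]
      rw [integral_add (h1.integrableOn.const_mul 2) (integrable_const _),
        integral_const_mul] at key
      simp only [integral_const, MeasurableSet.univ, measureReal_restrict_apply, univ_inter,
        Real.volume_real_Ioc_of_le (show x ≤ x + t by linarith), smul_eq_mul] at key
      have : ∫ y in Ioc x (x + t), (u y) ^ 2 ≤ mass u :=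
        setIntegral_le_integral h1 (Filter.Eventually.of_forall fun x => sq_nonneg _)
      nlinarith
  have hd := discrim_le_zero hquad
  rw [discrim] at hd
  nlinarith

lemma rpow_absorb (A c r : ℝ) (hA : 0 < A) (hc : 0 < c) (hr : 0 < r) (hr4 : r < 4) :
    ∃ C : ℝ, ∀ S : ℝ, 0 ≤ S → A * S ^ r ≤ c * S ^ 4 + C := by
  have hAc : 0 < A / c := by positivity
  set T := (A / c) ^ (4 - r)⁻¹ with hT
  have hT0 : 0 < T := by positivity
  refine ⟨A * T ^ r, fun S hS => ?_⟩
  rcases le_total S T with h | h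
  · have : S ^ r ≤ T ^ r := Real.rpow_le_rpow hS h hr.le
    have h4 : 0 ≤ c * S ^ 4 := by positivity
    nlinarith
  · have hS0 : 0 < S := lt_of_lt_of_le hT0 h
    have h1 : A / c ≤ S ^ (4 - r) := by
      calc A / c = T ^ (4 - r) := by
            rw [hT, Real.rpow_inv_rpow hAc.le (by linarith)]
        _ ≤ S ^ (4 - r) := Real.rpow_le_rpow hT0.le h (by linarith)
    have h2 : S ^ 4 = S ^ (4 - r) * S ^ r := by
      rw [← Real.rpow_add hS0, sub_add_cancel]
      norm_cast
    have h3 : A ≤ c * S ^ (4 - r) := by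
      rw [div_le_iff₀ hc] at h1
      linarith
    have h5 : 0 < S ^ r := by positivity
    have h6 : 0 < T ^ r := by positivity
    rw [h2]
    nlinarith [mul_le_mul_of_nonneg_right h3 h5.le, mul_pos hA h6]

lemma bdd_part (p q μ : ℝ) (hp : 2 < p) (hp' : p < 6) (hq : 2 < q) (hq' : q < 4)
    (hμ : 0 < μ) :
    ∃ C : ℝ, ∀ u u' : ℝ → ℝ, IsH1 u u' → mass u = μ → C ≤ Ffun p q u u' := by
  obtain ⟨C1, hC1⟩ := rpow_absorb ((1 / p) * μ) (1 / (64 * μ)) (p - 2) (by positivity)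
    (by positivity) (by linarith) (by linarith)
  obtain ⟨C2, hC2⟩ := rpow_absorb (1 / q) (1 / (64 * μ)) q (by positivity)
    (by positivity) (by linarith) (by linarith)
  refine ⟨-C1 - C2, fun u u' h hm => ?_⟩
  have hsup := sup_bound u u' h
  rw [hm] at hsup
  obtain ⟨hc, h1, h2, hd⟩ := h
  unfold Ffun
  set K := ∫ x, (u' x) ^ 2 with hK
  have hK0 : 0 ≤ K := integral_nonneg fun x => sq_nonneg _
  set S := (16 * μ * K) ^ ((4 : ℕ) : ℝ)⁻¹ with hS
  have hS0 : 0 ≤ S := by positivity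
  have hS4 : S ^ 4 = 16 * μ * K :=
    Real.rpow_inv_natCast_pow (by positivity) (by norm_num)
  have hu : ∀ x, |u x| ≤ S := by
    intro x
    refine le_of_pow_le_pow_left₀ (n := 4) (by norm_num) hS0 ?_
    rw [hS4, Even.pow_abs (by decide)]
    exact hsup x
  have hpI : ∫ x, |u x| ^ p ≤ S ^ (p - 2) * μ := by
    rw [← hm, mass, ← integral_const_mul]
    refine integral_mono_of_nonneg (Filter.Eventually.of_forall fun x => by positivity)
      (h1.const_mul _) (Filter.Eventually.of_forall fun x => ?_)
    have : |u x| ^ p = |u x| ^ (p - 2) * (u x) ^ 2 := by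
      rw [← sq_abs (u x), ← Real.rpow_natCast, ← Real.rpow_add_of_nonneg (abs_nonneg _)
        (by linarith) (by norm_num)]
      norm_num
    simp only [this]
    exact mul_le_mul_of_nonneg_right
      (Real.rpow_le_rpow (abs_nonneg _) (hu x) (by linarith)) (sq_nonneg _)
  have hqI : |u 0| ^ q ≤ S ^ q := Real.rpow_le_rpow (abs_nonneg _) (hu 0) (by linarith)
  have e1 := hC1 S hS0
  have e2 := hC2 S hS0
  have e3 : (1 / p) * (∫ x, |u x| ^ p) ≤ (1 / p) * (S ^ (p - 2) * μ) :=
    mul_le_mul_of_nonneg_left hpI (by positivity)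
  have e4 : (1 / q) * |u 0| ^ q ≤ (1 / q) * S ^ q :=
    mul_le_mul_of_nonneg_left hqI (by positivity)
  have e5 : 1 / (64 * μ) * S ^ 4 = K / 4 := by
    rw [hS4]
    field_simp
    ring
  rw [e5] at e1 e2
  linarith

lemma exp_abs_integral (l : ℝ) (hl : 0 < l) : ∫ x : ℝ, Real.exp (-l * |x|) ^ 2 = 1 / l := by
  have h := integral_comp_abs (f := fun x => Real.exp (-(2 * l) * x))
  rw [integral_exp_mul_Ioi (by linarith)] at h
  have e : ∀ x : ℝ, Real.exp (-l * |x|) ^ 2 = Real.exp (-(2 * l) * |x|) := by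
    intro x
    rw [← Real.exp_nat_mul]
    congr 1
    push_cast
    ring
  simp_rw [e]
  rw [h]
  simp
  field_simp

lemma exp_abs_integrable (l : ℝ) (hl : 0 < l) :
    Integrable (fun x : ℝ => Real.exp (-l * |x|) ^ 2) := by
  refine Integrable.of_integral_ne_zero ?_
  rw [exp_abs_integral l hl]
  positivity

lemma neg_part (p q μ : ℝ) (hq : 2 < q) (hq' : q < 4) (hp : 2 < p) (hμ : 0 < μ) :
    ∃ u₀ u₀' : ℝ → ℝ, IsH1 u₀ u₀' ∧ mass u₀ = μ ∧ Ffun p q u₀ u₀' < 0 := by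
  have hμq : 0 < μ / q := by positivity
  set s := (μ / q) ^ (2 - q / 2)⁻¹ with hs
  have hs0 : 0 < s := by positivity
  have hsp : s ^ (2 - q / 2) = μ / q := by
    rw [hs, Real.rpow_inv_rpow hμq.le (by linarith)]
  set l := s / μ with hl
  have hl0 : 0 < l := by positivity
  set A := √s with hA
  have hA2 : A ^ 2 = s := Real.sq_sqrt hs0.le
  have hA0 : 0 < A := Real.sqrt_pos.2 hs0
  set g : ℝ → ℝ := fun x => if x < 0 then l else -l with hg
  have hg2 : ∀ x, g x ^ 2 = l ^ 2 := by
    intro x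
    simp only [hg]
    split_ifs <;> ring
  have hgm : Measurable g := Measurable.ite measurableSet_Iio measurable_const measurable_const
  have hd2 : ∀ x, (g x * (A * Real.exp (-l * |x|))) ^ 2
      = (l ^ 2 * s) * Real.exp (-l * |x|) ^ 2 := by
    intro x
    rw [mul_pow, mul_pow, hg2, hA2]
    ring
  have hu2 : ∀ x, (A * Real.exp (-l * |x|)) ^ 2 = s * Real.exp (-l * |x|) ^ 2 := by
    intro x
    rw [mul_pow, hA2]
  have hcont : Continuous (fun x : ℝ => A * Real.exp (-l * |x|)) := by fun_prop
  refine ⟨fun x => A * Real.exp (-l * |x|), fun x => g x * (A * Real.exp (-l * |x|)),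
    ⟨hcont, ?_, ?_, ?_⟩, ?_, ?_⟩
  · simp_rw [hu2]
    exact (exp_abs_integrable l hl0).const_mul _
  · simp_rw [hd2]
    exact (exp_abs_integrable l hl0).const_mul _
  · intro a b hab
    symm
    refine integral_eq_of_hasDerivAt_off_countable_of_le (fun x => A * Real.exp (-l * |x|)) _ hab
      (s := {0}) (countable_singleton _) hcont.continuousOn ?_ ?_
    · rintro x ⟨-, hx⟩
      have hx0 : x ≠ 0 := hx
      rcases lt_or_gt_of_ne hx0 with h | h
      · have h3 := (((hasDerivAt_abs_neg h).const_mul (-l)).exp).const_mul A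
        refine h3.congr_deriv ?_
        simp only [hg, if_pos h]
        ring
      · have h3 := (((hasDerivAt_abs_pos h).const_mul (-l)).exp).const_mul A
        refine h3.congr_deriv ?_
        simp only [hg, if_neg h.le.not_gt]
        ring
    · refine IntervalIntegrable.mono_fun' (g := fun x => l * (A * Real.exp (-l * |x|)))
        ((hcont.const_mul l).intervalIntegrable _ _) ?_ ?_
      · exact (hgm.mul hcont.measurable).aestronglyMeasurable
      · refine Filter.Eventually.of_forall fun x => ?_
        have : |g x| = l := by
          rw [← abs_of_pos hl0]
          exact (sq_eq_sq_iff_abs_eq_abs _ _).1 (hg2 x)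
        simp only [norm_mul, Real.norm_eq_abs, this, abs_of_pos hA0, Real.abs_exp]
        exact le_rfl
  · unfold mass
    simp_rw [hu2]
    rw [integral_const_mul, exp_abs_integral l hl0, hl]
    field_simp
  · unfold Ffun
    simp_rw [hd2]
    rw [integral_const_mul, exp_abs_integral l hl0]
    have hI : 0 ≤ ∫ x : ℝ, |A * Real.exp (-l * |x|)| ^ p :=
      integral_nonneg fun x => by positivity
    have hI' : 0 ≤ (1 / p) * ∫ x : ℝ, |A * Real.exp (-l * |x|)| ^ p :=
      mul_nonneg (by positivity) hI
    have h0 : |A * Real.exp (-l * |(0 : ℝ)|)| ^ q = s ^ (q / 2) := by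
      simp only [abs_zero, mul_zero, Real.exp_zero, mul_one, abs_of_pos hA0]
      rw [hA, Real.sqrt_eq_rpow, ← Real.rpow_mul hs0.le]
      congr 1
      ring
    rw [h0]
    have hs2 : s ^ 2 = (μ / q) * s ^ (q / 2) := by
      rw [← hsp, ← Real.rpow_add hs0, sub_add_cancel]
      norm_cast
    have hX : 0 < s ^ (q / 2) := by positivity
    have e : 1 / 2 * (l ^ 2 * s * (1 / l)) = (1 / 2) * ((1 / q) * s ^ (q / 2)) := by
      have : l ^ 2 * s * (1 / l) = s ^ 2 / μ := by
        rw [hl]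
        field_simp
      rw [this, hs2]
      field_simp
    rw [e]
    have : 0 < (1 / q) * s ^ (q / 2) := by positivity
    linarith

theorem stmt6 (p q μ : ℝ) (hp : 2 < p) (hp' : p < 6) (hq : 2 < q) (hq' : q < 4)
    (hμ : 0 < μ) :
    (∃ C : ℝ, ∀ u u' : ℝ → ℝ, IsH1 u u' → mass u = μ → C ≤ Ffun p q u u') ∧
    (∃ u₀ u₀' : ℝ → ℝ, IsH1 u₀ u₀' ∧ mass u₀ = μ ∧ Ffun p q u₀ u₀' < 0) := by
  exact ⟨bdd_part p q μ hp hp' hq hq' hμ, neg_part p q μ hq hq' hp hμ⟩
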